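/- Let f : ℝ → ℂ be defined by f(t) = t·e^{i t⁴/4}, and let g : ℝ → ℂ be the function defined by g(x) = −lim_{R→+∞} ∫_x^R f(t) dt (this limit exists for every x). Then for every real x with |x| ≥ 1, one has |g(x)| ≤ 2/x². -/

import Mathlib

open Filter intervalIntegral

lemma aux_norm (t : ℝ) : ‖Complex.exp (Complex.I * (t : ℂ) ^ 4 / 4)‖ = 1 := by
  have : Complex.I * (t : ℂ) ^ 4 / 4 = ((t ^ 4 / 4 : ℝ) : ℂ) * Complex.I := by
    push_cast; ring
  rw [this, Complex.norm_exp_ofReal_mul_I]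

lemma aux_deriv (t : ℝ) (ht : t ≠ 0) :
    HasDerivAt (fun t : ℝ => Complex.exp (Complex.I * (t : ℂ) ^ 4 / 4) * (-Complex.I * ((t : ℂ) ^ 2)⁻¹))
      ((t : ℂ) * Complex.exp (Complex.I * (t : ℂ) ^ 4 / 4)
        + 2 * Complex.I / (t : ℂ) ^ 3 * Complex.exp (Complex.I * (t : ℂ) ^ 4 / 4)) t := by
  have ht' : (t : ℂ) ≠ 0 := by exact_mod_cast ht
  have h0 : HasDerivAt (fun z : ℂ => z) 1 (t : ℂ) := hasDerivAt_id _
  have h1 := (((h0.fun_pow 4).const_mul Complex.I).div_const 4).cexp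
  have h2 := (h0.fun_pow 2).fun_inv (pow_ne_zero 2 ht')
  have h3 := (h1.fun_mul (h2.const_mul (-Complex.I))).comp_ofReal
  have hI : Complex.I ^ 2 = -1 := Complex.I_sq
  refine h3.congr_deriv ?_
  norm_num
  field_simp
  ring_nf
  simp only [hI]
  ring

lemma aux_bound (x R : ℝ) (hx : 0 < x) (hR : x ≤ R) :
    ‖∫ t in x..R, (t : ℂ) * Complex.exp (Complex.I * (t : ℂ) ^ 4 / 4)‖ ≤ 2 / x ^ 2 := by
  have hpos : ∀ t ∈ Set.uIcc x R, 0 < t := fun t ht => by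
    rw [Set.uIcc_of_le hR] at ht; exact hx.trans_le ht.1
  have hc1 : Continuous fun t : ℝ => (t : ℂ) * Complex.exp (Complex.I * (t : ℂ) ^ 4 / 4) := by
    fun_prop
  have i1 := hc1.intervalIntegrable (μ := MeasureTheory.volume) x R
  have i2 : IntervalIntegrable (fun t : ℝ => 2 * Complex.I / (t : ℂ) ^ 3 *
      Complex.exp (Complex.I * (t : ℂ) ^ 4 / 4)) MeasureTheory.volume x R := by
    apply ContinuousOn.intervalIntegrable
    refine ContinuousOn.mul (ContinuousOn.div (by fun_prop) (by fun_prop) ?_) (by fun_prop)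
    intro t ht
    have := (hpos t ht).ne'
    exact pow_ne_zero 3 (by exact_mod_cast this)
  have i3 : IntervalIntegrable (fun t : ℝ => 2 / t ^ 3) MeasureTheory.volume x R := by
    apply ContinuousOn.intervalIntegrable
    refine ContinuousOn.div (by fun_prop) (by fun_prop) ?_
    intro t ht
    exact pow_ne_zero 3 (hpos t ht).ne'
  have e1 := integral_eq_sub_of_hasDerivAt
    (fun t ht => aux_deriv t (hpos t ht).ne') (i1.add i2)
  rw [integral_add i1 i2] at e1
  have e2 : ∫ t in x..R, 2 / t ^ 3 = -(R ^ 2)⁻¹ - -(x ^ 2)⁻¹ := by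
    refine integral_eq_sub_of_hasDerivAt (f := fun t : ℝ => -(t ^ 2)⁻¹) (fun t ht => ?_) i3
    have h := hpos t ht
    have h2 := (((hasDerivAt_id' t).fun_pow 2).fun_inv (pow_ne_zero 2 h.ne')).fun_neg
    refine h2.congr_deriv ?_
    norm_num
    field_simp
  have b : ‖∫ t in x..R, 2 * Complex.I / (t : ℂ) ^ 3 *
      Complex.exp (Complex.I * (t : ℂ) ^ 4 / 4)‖ ≤ ∫ t in x..R, 2 / t ^ 3 := by
    refine norm_integral_le_of_norm_le hR (MeasureTheory.ae_of_all _ fun t ht => ?_) i3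
    have : 0 < t := hx.trans ht.1
    rw [norm_mul, aux_norm]
    simp [abs_of_pos this]
  have n : ∀ t : ℝ, ‖Complex.exp (Complex.I * (t : ℂ) ^ 4 / 4) * (-Complex.I * ((t : ℂ) ^ 2)⁻¹)‖
      = (t ^ 2)⁻¹ := fun t => by
    rw [norm_mul, aux_norm]; simp
  rw [eq_sub_of_add_eq e1]
  refine (norm_sub_le _ _).trans ((add_le_add (norm_sub_le _ _) b).trans ?_)
  rw [n, n, e2, div_eq_mul_inv]
  linarith

/-- Let `f(t) = t e^{it⁴/4}` and `g(x) = -lim_{R→∞} ∫_x^R f(t) dt`.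
Then `|g(x)| ≤ 2/x²` for every real `x` with `|x| ≥ 1`. -/
theorem stmt_13 (f g : ℝ → ℂ)
    (hf : ∀ t : ℝ, f t = (t : ℂ) * Complex.exp (Complex.I * (t : ℂ) ^ 4 / 4))
    (hg : ∀ x : ℝ, Tendsto (fun R : ℝ => ∫ t in x..R, f t) atTop (nhds (-g x))) :
    ∀ x : ℝ, 1 ≤ |x| → ‖g x‖ ≤ 2 / x ^ 2 := by
  obtain rfl : f = fun t : ℝ => (t : ℂ) * Complex.exp (Complex.I * (t : ℂ) ^ 4 / 4) := funext hf
  have key : ∀ x : ℝ, 0 < x → ‖g x‖ ≤ 2 / x ^ 2 := fun x hx => by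
    rw [← norm_neg]
    refine le_of_tendsto (hg x).norm ?_
    filter_upwards [eventually_ge_atTop x] with R hR
    exact aux_bound x R hx hR
  intro x hx
  rcases lt_trichotomy x 0 with h | h | h
  · have hc1 : Continuous fun t : ℝ => (t : ℂ) * Complex.exp (Complex.I * (t : ℂ) ^ 4 / 4) := by
      fun_prop
    have z : ∫ t in x..(-x), (t : ℂ) * Complex.exp (Complex.I * (t : ℂ) ^ 4 / 4) = 0 := by
      have h1 := integral_comp_neg (a := x) (b := -x)
        (fun t : ℝ => (t : ℂ) * Complex.exp (Complex.I * (t : ℂ) ^ 4 / 4))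
      have e4 : ∀ t : ℝ, (-(t : ℂ)) ^ 4 = (t : ℂ) ^ 4 := fun t => by ring
      simp only [Complex.ofReal_neg, neg_neg, e4, neg_mul, integral_neg] at h1
      exact self_eq_neg.mp h1.symm
    have e : g x = g (-x) := by
      refine neg_injective (tendsto_nhds_unique (hg x) ((hg (-x)).congr fun R => ?_))
      rw [← integral_add_adjacent_intervals (hc1.intervalIntegrable x (-x))
        (hc1.intervalIntegrable (-x) R), z, zero_add]
    rw [e]
    simpa using key (-x) (by linarith)
  · subst h; norm_num at hx
  · exact key x h
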